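/- arXiv:2306.15126 — 3 statements merged into one kernel-verified Lean document; each statement's English description precedes it below -/
import Mathlib

section
/- Fix integers k ≥ 1, d ≥ 1, m ≥ 1, let N be the number of multi-indices α ∈ ℕ^d with 1 ≤ |α| ≤ m, and let Ver_m : ℝ^d → ℝ^N be the map whose coordinates are all monomials v ↦ v^α with 1 ≤ |α| ≤ m. Let f : ℝ^k → ℝ^d be a smooth embedding. Then Ver_m ∘ f : ℝ^k → ℝ^N is a graphlike embedding if and only if there exist real polynomial functions p₁, …, p_k : ℝ^d → ℝ, each of total degree at most m, such that the map p = (p₁, …, p_k) ∘ f : ℝ^k → ℝ^k is injective and its derivative at every point of ℝ^k is invertible (equivalently, p ∘ f is a diffeomorphism onto an open subset of ℝ^k; equivalently, the fibres of (p₁,…,p_k) intersect the image of f transversely in at most one point, i.e. the image of f is tamed by p₁,…,p_k). -/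
/-!
A smooth injective immersion into `ℝ^N` has a graphlike image over a `k`-dimensional subspace iff
some linear map `A : ℝ^N → ℝ^k` is injective on the image with invertible derivative along it
(`isGraphlike_iff_exists_linear`). If the image is the graph of `φ : S → U`, then `A` is the
projection to `S` along `U` followed by an isomorphism `S ≃ ℝ^k`: a point `s + φ s` is determined
by `s`, and a tangent vector `ξ + dφ(ξ)` by `ξ`. Conversely, given `A`, take `U = ker A` and let `S`
be the range of a linear right inverse of `A`; the inverse function theorem makes `A ∘ F` a
diffeomorphism onto an open set, and its inverse provides the smooth map `φ`.

For `F = Ver_m ∘ f`, linear maps on `ℝ^N` correspond under pullback by `Ver_m` to polynomials of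
degree at most `m` up to constant terms (`exists_poly_of_linear`, `exists_linear_of_poly`), and
constants affect neither injectivity nor derivatives. Since `m ≥ 1`, `Ver_m` has a linear left
inverse (`exists_linear_leftInverse_ver`), so `Ver_m ∘ f` is an injective immersion.
-/

open Function Topology Set

/-- The type of multi-indices `α ∈ ℕ^d` with `1 ≤ |α| ≤ m` (each entry of such an `α` is
at most `m`, so they are faithfully encoded with entries in `Fin (m+1)`). -/
abbrev MultiIdx (d m : ℕ) : Type :=
  {α : Fin d → Fin (m + 1) // 1 ≤ ∑ i, (α i : ℕ) ∧ ∑ i, (α i : ℕ) ≤ m}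

/-- The Veronese-type map `Ver_m : ℝ^d → ℝ^N` whose coordinates are all the monomials
`v ↦ v^α` with `1 ≤ |α| ≤ m`. -/
def Ver (d m : ℕ) (v : Fin d → ℝ) : MultiIdx d m → ℝ :=
  fun α => ∏ i, v i ^ (α.1 i : ℕ)

/-- A map `f` defined on a set `M ⊆ ℝ^k` with values in `ℝⁿ ≅ (ι → ℝ)` is graphlike if
its image `f '' M` can be written as `{x + φ x | x ∈ N}` where `N` is an open subset of a
`k`-dimensional linear subspace `S` of `ℝⁿ` and `φ : N → U` is a smooth map into a
complementary subspace `U`. -/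
def IsGraphlike {k : ℕ} {ι : Type*} [Fintype ι]
    (M : Set (Fin k → ℝ)) (f : (Fin k → ℝ) → (ι → ℝ)) : Prop :=
  ∃ S U : Submodule ℝ (ι → ℝ), IsCompl S U ∧ Module.finrank ℝ S = k ∧
    ∃ (N : Set S) (φ : S → U), IsOpen N ∧ ContDiffOn ℝ (⊤ : ℕ∞) φ N ∧
      f '' M = (fun x : S => (x : ι → ℝ) + (φ x : ι → ℝ)) '' N

/-- A smooth embedding of `ℝ^k` into a finite-dimensional coordinate space. -/
def IsSmoothEmbedding {k : ℕ} {ι : Type*} [Fintype ι]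
    (f : (Fin k → ℝ) → (ι → ℝ)) : Prop :=
  ContDiff ℝ (⊤ : ℕ∞) f ∧ (∀ x, Injective (fderiv ℝ f x)) ∧ Topology.IsEmbedding f

/-! ### Graphlike images and linear maps -/

/-- A smooth injective immersion `F : ℝ^k → ℝ^ι` is graphlike exactly when some linear map
`A : ℝ^ι → ℝ^k` restricts to a diffeomorphism from the image of `F` onto an open set, expressed as
`A ∘ F` being injective with invertible derivative everywhere. Only the image of `F` and its
tangent spaces matter, so `F` need not be the Veronese composite. -/
theorem isGraphlike_iff_exists_linear {k : ℕ} {ι : Type*} [Fintype ι]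
    (F : (Fin k → ℝ) → (ι → ℝ)) (hF : ContDiff ℝ (⊤ : ℕ∞) F) (hinj : Injective F)
    (himm : ∀ x, Injective (fderiv ℝ F x)) :
    IsGraphlike Set.univ F ↔
      ∃ A : (ι → ℝ) →L[ℝ] (Fin k → ℝ), Injective (A ∘ F) ∧
        ∀ x, Bijective (fderiv ℝ (A ∘ F) x) := by
  have hFd : Differentiable ℝ F := hF.differentiable (by simp)
  have hchain : ∀ (A : (ι → ℝ) →L[ℝ] (Fin k → ℝ)) (x : Fin k → ℝ),
      fderiv ℝ (A ∘ F) x = A.comp (fderiv ℝ F x) := fun A x =>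
    (A.hasFDerivAt.comp x (hFd x).hasFDerivAt).fderiv
  constructor
  · rintro ⟨S, U, hSU, hS, N, φ, hN, hφ, himg⟩
    let e : S ≃ₗ[ℝ] (Fin k → ℝ) := LinearEquiv.ofFinrankEq _ _ (by simp [hS])
    let π : (ι → ℝ) →L[ℝ] S := (S.projectionOnto U hSU).toContinuousLinearMap
    -- Every point of the image is the point of the graph lying over its projection.
    have hgraph : ∀ x, π (F x) ∈ N ∧ F x = (π (F x) : ι → ℝ) + (φ (π (F x)) : ι → ℝ) := by
      intro x
      have hx : F x ∈ F '' Set.univ := ⟨x, trivial, rfl⟩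
      rw [himg] at hx
      obtain ⟨s, hs, hsx⟩ := hx
      have hπ : π (F x) = s := by
        rw [← hsx]
        simp [π]
      exact ⟨hπ ▸ hs, by rw [hπ]; exact hsx.symm⟩
    let A : (ι → ℝ) →L[ℝ] (Fin k → ℝ) := (e.toLinearMap.toContinuousLinearMap).comp π
    have hA : ∀ w, A w = e (π w) := fun w => rfl
    refine ⟨A, ?_, ?_⟩
    · intro x y hxy
      have h : π (F x) = π (F y) := e.injective hxy
      apply hinj
      rw [(hgraph x).2, (hgraph y).2, h]
    · intro x
      have hker : Injective (fderiv ℝ (A ∘ F) x) := by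
        rw [injective_iff_map_eq_zero]
        intro v hv
        rw [hchain] at hv
        have hv' : π (fderiv ℝ F x v) = 0 := e.map_eq_zero_iff.1 hv
        have hφd : HasFDerivAt φ (fderiv ℝ φ (π (F x))) (π (F x)) :=
          ((hφ.contDiffAt (hN.mem_nhds (hgraph x).1)).differentiableAt (by simp)).hasFDerivAt
        have hG : HasFDerivAt (fun y => π (F y)) (π.comp (fderiv ℝ F x)) x :=
          π.hasFDerivAt.comp x (hFd x).hasFDerivAt
        have h2 := (S.subtypeL.hasFDerivAt.comp x hG).add
          (U.subtypeL.hasFDerivAt.comp x (hφd.comp x hG))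
        have h3 : F = (S.subtypeL ∘ fun y => π (F y)) + (U.subtypeL ∘ φ ∘ fun y => π (F y)) :=
          funext fun y => (hgraph y).2
        rw [← h3] at h2
        have h4 : fderiv ℝ F x v = 0 := by
          rw [h2.fderiv]
          simp [hv']
        exact himm x (by rw [h4, map_zero])
      exact ⟨hker, LinearMap.surjective_of_injective (f := (fderiv ℝ (A ∘ F) x).toLinearMap) hker⟩
  · rintro ⟨A, hAinj, hAbij⟩
    have hq : ContDiff ℝ (⊤ : ℕ∞) (A ∘ F) := A.contDiff.comp hF
    let e : (x : Fin k → ℝ) → (Fin k → ℝ) ≃L[ℝ] (Fin k → ℝ) := fun x =>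
      (LinearEquiv.ofBijective (fderiv ℝ (A ∘ F) x).toLinearMap (hAbij x)).toContinuousLinearEquiv
    have he : ∀ x, ((e x : (Fin k → ℝ) ≃L[ℝ] (Fin k → ℝ)) : (Fin k → ℝ) →L[ℝ] (Fin k → ℝ))
        = fderiv ℝ (A ∘ F) x := fun x => by ext; rfl
    have hopen : IsOpenMap (A ∘ F) := by
      apply isOpenMap_of_hasStrictFDerivAt_equiv (f' := e)
      intro x
      rw [he]
      exact hq.contDiffAt.hasStrictFDerivAt (by simp)
    have hoe : IsOpenEmbedding (A ∘ F) :=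
      IsOpenEmbedding.of_continuous_injective_isOpenMap hq.continuous hAinj hopen
    let Q := hoe.toOpenPartialHomeomorph (A ∘ F)
    have hgl : ∀ x, Q.symm (A (F x)) = x := fun x => hoe.toOpenPartialHomeomorph_left_inv
    have hgs : ∀ y ∈ Set.range (A ∘ F), ContDiffAt ℝ (⊤ : ℕ∞) Q.symm y := by
      rintro _ ⟨x, rfl⟩
      refine Q.contDiffAt_symm (f₀' := e x) (a := (A ∘ F) x) ?_ ?_ ?_
      · simp [Q]
      · rw [he]
        have : Q.symm ((A ∘ F) x) = x := hgl x
        rw [this]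
        exact (hq.differentiable (by simp) x).hasFDerivAt
      · exact hq.contDiffAt
    -- A is onto because already its restriction to one tangent space of the image is.
    have hAsurj : Surjective A := by
      have h := (hAbij 0).2
      rw [hchain] at h
      exact Function.Surjective.of_comp h
    obtain ⟨B, hB⟩ := A.toLinearMap.exists_rightInverse_of_surjective
      (LinearMap.range_eq_top.2 hAsurj)
    have hAB : ∀ y, A (B y) = y := fun y => LinearMap.congr_fun hB y
    let U : Submodule ℝ (ι → ℝ) := LinearMap.ker A.toLinearMap
    let S : Submodule ℝ (ι → ℝ) := LinearMap.range B
    have hBA : ∀ s : S, B (A s) = s := by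
      rintro ⟨_, y, rfl⟩
      simp [hAB]
    let ρ : (ι → ℝ) →ₗ[ℝ] U := LinearMap.codRestrict U
      (LinearMap.id - B.comp A.toLinearMap) (fun w => by simp [U, hAB])
    have hρ : ∀ w, (ρ w : ι → ℝ) = w - B (A w) := fun w => rfl
    have hcompl : IsCompl S U := by
      refine ⟨?_, ?_⟩
      · rw [Submodule.disjoint_def]
        rintro _ ⟨y, rfl⟩ h
        have : A (B y) = 0 := h
        rw [hAB] at this
        simp [this]
      · rw [codisjoint_iff, eq_top_iff]
        intro w _
        exact Submodule.mem_sup.2 ⟨B (A w), ⟨_, rfl⟩, ρ w, (ρ w).2, by simp [hρ]⟩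
    refine ⟨S, U, hcompl, ?_, {s | A s ∈ Set.range (A ∘ F)}, fun s => ρ (F (Q.symm (A s))),
      ?_, ?_, ?_⟩
    · rw [LinearMap.finrank_range_of_inj (LeftInverse.injective hAB)]
      simp
    · exact hoe.isOpen_range.preimage (A.continuous.comp continuous_subtype_val)
    · intro s hs
      have h1 : ContDiffAt ℝ (⊤ : ℕ∞) (fun s : S => A s) s :=
        (A.comp S.subtypeL).contDiff.contDiffAt
      have h2 : ContDiffAt ℝ (⊤ : ℕ∞) (fun s : S => Q.symm (A s)) s :=
        (hgs _ hs).comp s h1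
      exact (ρ.toContinuousLinearMap.contDiff.comp hF |>.contDiffAt.comp s h2).contDiffWithinAt
    · ext w
      constructor
      · rintro ⟨x, -, rfl⟩
        refine ⟨⟨B (A (F x)), _, rfl⟩, ⟨x, by simp [hAB]⟩, ?_⟩
        simp [hAB, hgl, hρ]
      · rintro ⟨s, ⟨x, hx⟩, rfl⟩
        refine ⟨x, trivial, ?_⟩
        have hx' : A s = A (F x) := hx.symm
        simp only [hρ, hx', hgl]
        rw [← hx', hBA]
        simp

/-! ### The Veronese map and polynomials of degree at most `m` -/

theorem contDiff_ver (d m : ℕ) : ContDiff ℝ (⊤ : ℕ∞) (Ver d m) := by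
  unfold Ver
  fun_prop

/-- For `m ≥ 1` the degree-one coordinates of `Ver d m` are the coordinates of its argument, so
`Ver d m` has a linear left inverse. -/
theorem exists_linear_leftInverse_ver (d m : ℕ) (hm : 1 ≤ m) :
    ∃ L : (MultiIdx d m → ℝ) →L[ℝ] (Fin d → ℝ), ∀ v, L (Ver d m v) = v := by
  have hsum : ∀ i : Fin d, ∑ j, ((Pi.single i (⟨1, by omega⟩ : Fin (m + 1)) :
      Fin d → Fin (m + 1)) j : ℕ) = 1 := by
    intro i
    rw [Finset.sum_eq_single i] <;> simp +contextual
  let idx : Fin d → MultiIdx d m := fun i =>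
    ⟨Pi.single i ⟨1, by omega⟩, by rw [hsum], by rw [hsum]; exact hm⟩
  refine ⟨ContinuousLinearMap.pi fun i => ContinuousLinearMap.proj (idx i), fun v => ?_⟩
  ext i
  change ∏ j, v j ^ ((idx i).1 j : ℕ) = v i
  rw [Finset.prod_eq_single i] <;> simp +contextual [idx]

/-- The exponent vector of a multi-index as a finitely supported function, the form in which
`MvPolynomial` indexes monomials. -/
noncomputable def MultiIdx.toFinsupp {d m : ℕ} (α : MultiIdx d m) : Fin d →₀ ℕ :=
  Finsupp.equivFunOnFinite.symm fun i => (α.1 i : ℕ)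

theorem eval_monomial_toFinsupp {d m : ℕ} (α : MultiIdx d m) (c : ℝ) (v : Fin d → ℝ) :
    MvPolynomial.eval v (MvPolynomial.monomial α.toFinsupp c) = c * Ver d m v α := by
  rw [MvPolynomial.eval_monomial, Finsupp.prod_fintype _ _ (by simp)]
  rfl

/-- Linear functionals on `ℝ^N` pull back along `Ver d m` to polynomials of degree at most `m`. -/
theorem exists_poly_of_linear {d m : ℕ} (A : (MultiIdx d m → ℝ) →ₗ[ℝ] ℝ) :
    ∃ P : MvPolynomial (Fin d) ℝ, P.totalDegree ≤ m ∧
      ∀ v, MvPolynomial.eval v P = A (Ver d m v) := by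
  classical
  refine ⟨∑ α : MultiIdx d m, MvPolynomial.monomial α.toFinsupp (A (Pi.single α 1)), ?_, ?_⟩
  · refine MvPolynomial.totalDegree_finsetSum_le fun α _ =>
      (MvPolynomial.totalDegree_monomial_le _ _).trans ?_
    rw [Finsupp.sum_fintype _ _ (by simp)]
    exact α.2.2
  · intro v
    rw [map_sum, A.pi_apply_eq_sum_univ]
    refine Finset.sum_congr rfl fun α _ => ?_
    rw [eval_monomial_toFinsupp, smul_eq_mul, mul_comm]
    congr 2
    ext β
    simp [Pi.single_apply, eq_comm]

/-- Polynomials of degree at most `m` are, up to their constant term, linear in the monomials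
collected by `Ver d m`. -/
theorem exists_linear_of_poly {d m : ℕ} (P : MvPolynomial (Fin d) ℝ) (hP : P.totalDegree ≤ m) :
    ∃ (c : ℝ) (A : (MultiIdx d m → ℝ) →L[ℝ] ℝ),
      ∀ v, MvPolynomial.eval v P = c + A (Ver d m v) := by
  have hmono : ∀ s : P.support, ∃ (c : ℝ) (A : (MultiIdx d m → ℝ) →L[ℝ] ℝ),
      ∀ v, MvPolynomial.eval v (MvPolynomial.monomial s.1 (P.coeff s)) = c + A (Ver d m v) := by
    rintro ⟨s, hs⟩
    have hdeg : ∑ i, s i ≤ m := by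
      have := (MvPolynomial.le_totalDegree hs).trans hP
      rwa [Finsupp.sum_fintype _ _ (by simp)] at this
    by_cases h0 : s = 0
    · subst h0
      exact ⟨P.coeff 0, 0, fun v => by simp⟩
    · have hle : ∀ i, s i < m + 1 := fun i =>
        Nat.lt_succ_of_le ((Finset.single_le_sum (by simp) (Finset.mem_univ i)).trans hdeg)
      have hpos : 1 ≤ ∑ i, s i := by
        by_contra h
        apply h0
        ext i
        have := Finset.single_le_sum (f := s) (by simp) (Finset.mem_univ i)
        simp only [Finsupp.coe_zero, Pi.zero_apply]
        omega
      let α : MultiIdx d m := ⟨fun i => ⟨s i, hle i⟩, hpos, hdeg⟩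
      have hα : α.toFinsupp = s := by ext i; rfl
      refine ⟨0, P.coeff s • ContinuousLinearMap.proj α, fun v => ?_⟩
      have h := eval_monomial_toFinsupp α (P.coeff s) v
      rw [hα] at h
      simpa using h
  choose c A hcA using hmono
  refine ⟨∑ s, c s, ∑ s, A s, fun v => ?_⟩
  conv_lhs => rw [P.as_sum, map_sum, ← Finset.sum_coe_sort]
  rw [sum_apply, ← Finset.sum_add_distrib]
  exact Finset.sum_congr rfl fun s _ => hcA s v

/-- For a smooth embedding `f : ℝ^k → ℝ^d`, the composition `Ver_m ∘ f : ℝ^k → ℝ^N` is a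
graphlike embedding if and only if there are polynomial functions `p₁, …, p_k` on `ℝ^d`
of total degree at most `m` such that `(p₁, …, p_k) ∘ f : ℝ^k → ℝ^k` is injective with
invertible derivative at every point (i.e. the fibres of `(p₁, …, p_k)` intersect the
image of `f` transversely in at most one point: the image of `f` is tamed by the `pᵢ`). -/
theorem statement8 (k d m : ℕ) (hk : 1 ≤ k) (hd : 1 ≤ d) (hm : 1 ≤ m)
    (N : ℕ) (hN : Fintype.card (MultiIdx d m) = N)
    (f : (Fin k → ℝ) → (Fin d → ℝ)) (hf : IsSmoothEmbedding f) :
    IsGraphlike Set.univ (Ver d m ∘ f) ↔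
      ∃ P : Fin k → MvPolynomial (Fin d) ℝ,
        (∀ i, (P i).totalDegree ≤ m) ∧
        Injective (fun x : Fin k → ℝ => fun i => MvPolynomial.eval (f x) (P i)) ∧
        ∀ x : Fin k → ℝ,
          Bijective
            (fderiv ℝ (fun x : Fin k → ℝ => fun i => MvPolynomial.eval (f x) (P i)) x) := by
  obtain ⟨hsm, himm, hemb⟩ := hf
  obtain ⟨L, hL⟩ := exists_linear_leftInverse_ver d m hm
  have hFs : ContDiff ℝ (⊤ : ℕ∞) (Ver d m ∘ f) := (contDiff_ver d m).comp hsm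
  have hFinj : Injective (Ver d m ∘ f) :=
    (LeftInverse.injective hL).comp hemb.injective
  have hFimm : ∀ x, Injective (fderiv ℝ (Ver d m ∘ f) x) := by
    intro x
    have h := L.hasFDerivAt.comp x (hFs.differentiable (by simp) x).hasFDerivAt
    have hLf : (L ∘ (Ver d m ∘ f)) = f := funext fun y => hL (f y)
    rw [hLf] at h
    have hi := himm x
    rw [h.fderiv] at hi
    exact Function.Injective.of_comp hi
  rw [isGraphlike_iff_exists_linear _ hFs hFinj hFimm]
  constructor
  · rintro ⟨A, hinj, hbij⟩
    choose P hdeg hP using fun i : Fin k =>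
      exists_poly_of_linear ((ContinuousLinearMap.proj i).comp A).toLinearMap
    have heq : (fun x : Fin k → ℝ => fun i => MvPolynomial.eval (f x) (P i))
        = A ∘ (Ver d m ∘ f) := by
      ext x i
      exact hP i (f x)
    refine ⟨P, hdeg, ?_⟩
    rw [heq]
    exact ⟨hinj, hbij⟩
  · rintro ⟨P, hdeg, hinj, hbij⟩
    choose c A hP using fun i : Fin k => exists_linear_of_poly (P i) (hdeg i)
    have heq : (fun x : Fin k → ℝ => fun i => MvPolynomial.eval (f x) (P i))
        = fun x => c + (ContinuousLinearMap.pi A ∘ (Ver d m ∘ f)) x := by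
      ext x i
      exact hP i (f x)
    rw [heq] at hinj hbij
    refine ⟨ContinuousLinearMap.pi A, fun x y h => hinj (congrArg (c + ·) h), fun x => ?_⟩
    have := hbij x
    rwa [fderiv_const_add] at this
end

section
/- There exist a smooth flow Φ on ℝ² having exactly two equilibria, both isolated, and nonconstant smooth functions ψ₊, ψ₋ : ℝ² → ℝ such that ψ₊(Φ^t(x)) = e^{t}·ψ₊(x) and ψ₋(Φ^t(x)) = e^{-t}·ψ₋(x) for all t ∈ ℝ and x ∈ ℝ²; that is, a smooth planar flow with two isolated equilibria admitting globally defined nonconstant smooth Koopman eigenfunctions with eigenvalues 1 and −1. -/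
open Filter Topology Function

/-!
The flow is a product `X × Y` of two explicit flows on the line, and both eigenfunctions depend
only on the second coordinate.

* `Y` (`lineFlow`) is the flow of `y' = y² / (1 + y²)`. On each half-line `y ≠ 0` the function
  `u = y - 1/y` increases from `-∞` to `∞` and conjugates `Y` to the translation `u ↦ u + t`.
  Solving the quadratic equation for `y` gives a formula which is smooth across `y = 0`, the unique
  equilibrium. Hence `exp u` on `y > 0`, extended by `0` to `y ≤ 0`, has eigenvalue `1`; it is
  smooth because `exp (-1/y)` is flat at `0⁺`. Its reflection `y ↦ -y` has eigenvalue `-1`.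

* `X` (`twoPointFlow`) has exactly two equilibria. The linear flow `(c, s) ↦ (c, eᵗ s)` acts on
  directions in the plane, and so lifts to a flow (`angleFlow`) on angles `φ ∈ ℝ`, whose equilibria
  are the multiples of `π/2`. As every angle moves by less than `π/2`, the flow law can be read off
  from sines and cosines: the two sides differ by less than `2π`. The interval `(-π/2, π)` is
  invariant and contains exactly the equilibria `0` and `π/2`; it is identified with `ℝ` by
  an affine change of variable and the tangent.

The equilibria of the product are the pairs of equilibria, so there are exactly two of them.
-/

/-- A smooth flow on `ℝ^k = Fin k → ℝ`. -/
def IsSmoothFlow {k : ℕ} (Φ : ℝ → (Fin k → ℝ) → (Fin k → ℝ)) : Prop :=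
  ContDiff ℝ (⊤ : ℕ∞) (fun p : ℝ × (Fin k → ℝ) => Φ p.1 p.2) ∧
    (∀ x, Φ 0 x = x) ∧ ∀ t s x, Φ (t + s) x = Φ t (Φ s x)

noncomputable section

/-! ### A flow on the line with one semi-stable equilibrium -/

/-- The coefficient `1 - ty - y²` of the quadratic equation `y Y² + (1 - ty - y²) Y - y = 0` for the
point `Y` reached from `y` at time `t`, which is `Y - 1/Y = y - 1/y + t` with denominators
cleared. -/
def lineCoeff (t y : ℝ) : ℝ := 1 - t * y - y ^ 2

/-- The denominator of `lineFlow`. -/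
def lineDen (t y : ℝ) : ℝ := lineCoeff t y + √(lineCoeff t y ^ 2 + 4 * y ^ 2)

/-- The flow of `y' = y² / (1 + y²)`: the root with the sign of `y` of the quadratic equation of
`lineCoeff`, written so that `y = 0` is not singular. -/
def lineFlow (t y : ℝ) : ℝ := 2 * y / lineDen t y

lemma lineRad_pos (t y : ℝ) : 0 < lineCoeff t y ^ 2 + 4 * y ^ 2 := by
  rcases eq_or_ne y 0 with rfl | h
  · simp [lineCoeff]
  · positivity

lemma lineDen_pos (t y : ℝ) : 0 < lineDen t y := by
  unfold lineDen
  rcases eq_or_ne y 0 with rfl | h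
  · simp [lineCoeff]
  · have h1 : |lineCoeff t y| < √(lineCoeff t y ^ 2 + 4 * y ^ 2) := by
      rw [← Real.sqrt_sq_eq_abs]
      apply Real.sqrt_lt_sqrt (sq_nonneg _)
      have : 0 < y ^ 2 := by positivity
      linarith
    linarith [neg_abs_le (lineCoeff t y)]

lemma lineFlow_quad (t y : ℝ) :
    y * lineFlow t y ^ 2 + lineCoeff t y * lineFlow t y - y = 0 := by
  have hD := (lineDen_pos t y).ne'
  have h : lineDen t y ^ 2 - 2 * lineCoeff t y * lineDen t y - 4 * y ^ 2 = 0 := by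
    have := Real.sq_sqrt (lineRad_pos t y).le
    unfold lineDen
    linear_combination this
  unfold lineFlow
  field_simp
  linear_combination -y * h

lemma lineFlow_mul_pos (t : ℝ) {y : ℝ} (hy : y ≠ 0) : 0 < y * lineFlow t y := by
  have hD := lineDen_pos t y
  have : y * lineFlow t y = 2 * y ^ 2 / lineDen t y := by unfold lineFlow; ring
  rw [this]
  positivity

lemma lineFlow_zero_right (t : ℝ) : lineFlow t 0 = 0 := by simp [lineFlow]

lemma lineFlow_ne_zero (t : ℝ) {y : ℝ} (hy : y ≠ 0) : lineFlow t y ≠ 0 :=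
  (mul_ne_zero_iff.1 (lineFlow_mul_pos t hy).ne').2

/-- The coordinate `y - 1/y` turns `lineFlow` into a translation. -/
lemma lineFlow_coord (t : ℝ) {y : ℝ} (hy : y ≠ 0) :
    lineFlow t y - (lineFlow t y)⁻¹ = y - y⁻¹ + t := by
  have h := lineFlow_quad t y
  have hY := lineFlow_ne_zero t hy
  unfold lineCoeff at h
  field_simp
  linear_combination h

lemma coord_injective {a b : ℝ} (hab : 0 < a * b) (h : a - a⁻¹ = b - b⁻¹) : a = b := by
  have ha : a ≠ 0 := by rintro rfl; simp at hab
  have hb : b ≠ 0 := by rintro rfl; simp at hab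
  field_simp at h
  have h' : (a - b) * (a * b + 1) = 0 := by linear_combination h
  rcases mul_eq_zero.1 h' with h' | h' <;> linarith

lemma lineFlow_zero_left (y : ℝ) : lineFlow 0 y = y := by
  rcases eq_or_ne y 0 with rfl | hy
  · exact lineFlow_zero_right 0
  · refine coord_injective ?_ (by simpa using lineFlow_coord 0 hy)
    linarith [lineFlow_mul_pos 0 hy]

lemma lineFlow_add (t s y : ℝ) : lineFlow (t + s) y = lineFlow t (lineFlow s y) := by
  rcases eq_or_ne y 0 with rfl | hy
  · simp [lineFlow_zero_right]
  · have hs := lineFlow_ne_zero s hy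
    refine coord_injective ?_ ?_
    · have h1 := lineFlow_mul_pos (t + s) hy
      have h2 := mul_pos (lineFlow_mul_pos s hy) (lineFlow_mul_pos t hs)
      have h3 : 0 < (y * lineFlow s y) ^ 2 := pow_pos (lineFlow_mul_pos s hy) 2
      refine pos_of_mul_pos_left (b := (y * lineFlow s y) ^ 2) ?_ h3.le
      have := mul_pos h1 h2
      calc 0 < _ := this
        _ = _ := by ring
    · rw [lineFlow_coord _ hy, lineFlow_coord _ hs, lineFlow_coord _ hy]
      ring

lemma lineFlow_contDiff : ContDiff ℝ (⊤ : ℕ∞) (fun p : ℝ × ℝ => lineFlow p.1 p.2) := by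
  have hA : ContDiff ℝ (⊤ : ℕ∞) (fun p : ℝ × ℝ => lineCoeff p.1 p.2) := by
    unfold lineCoeff; fun_prop
  have hD : ContDiff ℝ (⊤ : ℕ∞) (fun p : ℝ × ℝ => lineDen p.1 p.2) :=
    hA.add (ContDiff.sqrt (by fun_prop) fun p => (lineRad_pos p.1 p.2).ne')
  exact ContDiff.div (by fun_prop) hD fun p => (lineDen_pos p.1 p.2).ne'

lemma lineFlow_one_eq_iff (y : ℝ) : lineFlow 1 y = y ↔ y = 0 := by
  refine ⟨fun h => ?_, fun h => by rw [h, lineFlow_zero_right]⟩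
  by_contra hy
  have := lineFlow_coord 1 hy
  rw [h] at this
  linarith

/-- The function `exp (y - 1/y)` on `y > 0`, extended by `0` to `y ≤ 0`. -/
def lineEigen (y : ℝ) : ℝ := expNegInvGlue y * Real.exp y

lemma lineEigen_contDiff : ContDiff ℝ (⊤ : ℕ∞) lineEigen :=
  expNegInvGlue.contDiff.mul Real.contDiff_exp

lemma lineEigen_of_nonpos {y : ℝ} (hy : y ≤ 0) : lineEigen y = 0 := by
  simp [lineEigen, expNegInvGlue.zero_of_nonpos hy]

lemma lineEigen_of_pos {y : ℝ} (hy : 0 < y) : lineEigen y = Real.exp (y - y⁻¹) := by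
  rw [lineEigen, expNegInvGlue, if_neg hy.not_ge, ← Real.exp_add]
  ring_nf

lemma lineFlow_pos (t : ℝ) {y : ℝ} (hy : 0 < y) : 0 < lineFlow t y :=
  pos_of_mul_pos_right (lineFlow_mul_pos t hy.ne') hy.le

lemma lineFlow_neg (t : ℝ) {y : ℝ} (hy : y < 0) : lineFlow t y < 0 :=
  neg_of_mul_pos_right (lineFlow_mul_pos t hy.ne) hy.le

lemma lineEigen_flow (t y : ℝ) : lineEigen (lineFlow t y) = Real.exp t * lineEigen y := by
  rcases lt_trichotomy y 0 with hy | rfl | hy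
  · rw [lineEigen_of_nonpos hy.le, lineEigen_of_nonpos (lineFlow_neg t hy).le, mul_zero]
  · rw [lineFlow_zero_right, lineEigen_of_nonpos le_rfl, mul_zero]
  · rw [lineEigen_of_pos hy, lineEigen_of_pos (lineFlow_pos t hy), lineFlow_coord t hy.ne',
      ← Real.exp_add, add_comm]

lemma lineEigen_neg_flow (t y : ℝ) :
    lineEigen (-lineFlow t y) = Real.exp (-t) * lineEigen (-y) := by
  rcases lt_trichotomy y 0 with hy | rfl | hy
  · rw [lineEigen_of_pos (neg_pos.2 hy), lineEigen_of_pos (neg_pos.2 (lineFlow_neg t hy)),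
      ← Real.exp_add]
    congr 1
    have := lineFlow_coord t hy.ne
    rw [inv_neg, inv_neg]
    linarith
  · rw [lineFlow_zero_right, neg_zero, lineEigen_of_nonpos le_rfl, mul_zero]
  · rw [lineEigen_of_nonpos (neg_nonpos.2 hy.le),
      lineEigen_of_nonpos (neg_nonpos.2 (lineFlow_pos t hy).le), mul_zero]

lemma lineEigen_one_ne : lineEigen 1 ≠ lineEigen (-1) := by
  rw [lineEigen_of_nonpos (by norm_num : (-1 : ℝ) ≤ 0), lineEigen_of_pos one_pos]
  exact (Real.exp_pos _).ne'

/-! ### A flow on angles -/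

/-- The dot product of the directions `(cos φ, sin φ)` and `(cos φ, eᵗ sin φ)`. -/
def angleDot (t φ : ℝ) : ℝ := Real.cos φ ^ 2 + Real.exp t * Real.sin φ ^ 2

/-- The cross product of the directions `(cos φ, sin φ)` and `(cos φ, eᵗ sin φ)`. -/
def angleCross (t φ : ℝ) : ℝ := (Real.exp t - 1) * (Real.sin φ * Real.cos φ)

/-- The lift to angles of the action of the linear flow `(c, s) ↦ (c, eᵗ s)` on directions. -/
def angleFlow (t φ : ℝ) : ℝ := φ + Real.arctan (angleCross t φ / angleDot t φ)

lemma angleDot_pos (t φ : ℝ) : 0 < angleDot t φ := by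
  unfold angleDot
  rcases eq_or_ne (Real.sin φ) 0 with h | h
  · have := Real.sin_sq_add_cos_sq φ
    rw [h] at this ⊢
    nlinarith
  · have := Real.exp_pos t
    positivity

lemma angleFlow_contDiff : ContDiff ℝ (⊤ : ℕ∞) (fun p : ℝ × ℝ => angleFlow p.1 p.2) := by
  unfold angleFlow
  refine contDiff_snd.add (ContDiff.arctan (ContDiff.div ?_ ?_ fun p => (angleDot_pos _ _).ne'))
  · unfold angleCross; fun_prop
  · unfold angleDot; fun_prop

lemma angleFlow_lt (t φ : ℝ) : angleFlow t φ < φ + Real.pi / 2 := by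
  have := Real.arctan_lt_pi_div_two (angleCross t φ / angleDot t φ)
  unfold angleFlow; linarith

lemma lt_angleFlow (t φ : ℝ) : φ - Real.pi / 2 < angleFlow t φ := by
  have := Real.neg_pi_div_two_lt_arctan (angleCross t φ / angleDot t φ)
  unfold angleFlow; linarith

/-- The direction of `angleFlow t φ` is that of `(cos φ, eᵗ sin φ)`. -/
lemma angleFlow_direction (t φ : ℝ) : ∃ r > 0, Real.cos (angleFlow t φ) = r * Real.cos φ ∧
    Real.sin (angleFlow t φ) = r * (Real.exp t * Real.sin φ) := by
  have hN := angleDot_pos t φ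
  have hR : 0 < √(1 + (angleCross t φ / angleDot t φ) ^ 2) := by positivity
  have hcs := Real.sin_sq_add_cos_sq φ
  refine ⟨(angleDot t φ)⁻¹ / √(1 + (angleCross t φ / angleDot t φ) ^ 2), by positivity, ?_, ?_⟩
  · have h : Real.cos φ * angleDot t φ - Real.sin φ * angleCross t φ = Real.cos φ := by
      unfold angleDot angleCross
      linear_combination Real.cos φ * hcs
    rw [angleFlow, Real.cos_add, Real.cos_arctan, Real.sin_arctan]
    field_simp
    linear_combination h
  · have h : Real.sin φ * angleDot t φ + Real.cos φ * angleCross t φ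
        = Real.exp t * Real.sin φ := by
      unfold angleDot angleCross
      linear_combination Real.exp t * Real.sin φ * hcs
    rw [angleFlow, Real.sin_add, Real.cos_arctan, Real.sin_arctan]
    field_simp
    linear_combination h

lemma angleFlow_zero_left (φ : ℝ) : angleFlow 0 φ = φ := by
  simp [angleFlow, angleCross]

lemma angleFlow_add (t s φ : ℝ) : angleFlow (t + s) φ = angleFlow t (angleFlow s φ) := by
  obtain ⟨r₁, h₁, hc₁, hs₁⟩ := angleFlow_direction s φ
  obtain ⟨r₂, h₂, hc₂, hs₂⟩ := angleFlow_direction t (angleFlow s φ)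
  obtain ⟨r₃, h₃, hc₃, hs₃⟩ := angleFlow_direction (t + s) φ
  have n₂ := Real.sin_sq_add_cos_sq (angleFlow t (angleFlow s φ))
  have n₃ := Real.sin_sq_add_cos_sq (angleFlow (t + s) φ)
  have hpos : 0 < r₂ * r₁ := mul_pos h₂ h₁
  have hc : Real.cos (angleFlow t (angleFlow s φ)) * r₃ =
      Real.cos (angleFlow (t + s) φ) * (r₂ * r₁) := by
    rw [hc₂, hc₁, hc₃]; ring
  have hs : Real.sin (angleFlow t (angleFlow s φ)) * r₃ =
      Real.sin (angleFlow (t + s) φ) * (r₂ * r₁) := by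
    rw [hs₂, hs₁, hs₃, Real.exp_add]; ring
  -- Both directions are unit vectors, so the positive scaling factors agree.
  have hr : r₃ = r₂ * r₁ := by
    have : r₃ ^ 2 = (r₂ * r₁) ^ 2 := by
      calc r₃ ^ 2 = (Real.sin (angleFlow t (angleFlow s φ)) * r₃) ^ 2
            + (Real.cos (angleFlow t (angleFlow s φ)) * r₃) ^ 2 := by
            linear_combination -r₃ ^ 2 * n₂
        _ = _ := by rw [hs, hc]; linear_combination (r₂ * r₁) ^ 2 * n₃
    exact (pow_left_inj₀ h₃.le hpos.le two_ne_zero).1 this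
  rw [hr] at hc hs
  have hc' := mul_right_cancel₀ hpos.ne' hc
  have hs' := mul_right_cancel₀ hpos.ne' hs
  -- The angles have equal cosine and sine and differ by at most `3 * (π / 2) < 2 * π`.
  have h1 : Real.cos (angleFlow (t + s) φ - angleFlow t (angleFlow s φ)) = 1 := by
    rw [Real.cos_sub, hc', hs']
    linear_combination n₃
  have a1 := angleFlow_lt t (angleFlow s φ)
  have a2 := lt_angleFlow t (angleFlow s φ)
  have a3 := angleFlow_lt s φ
  have a4 := lt_angleFlow s φ
  have a5 := angleFlow_lt (t + s) φ
  have a6 := lt_angleFlow (t + s) φ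
  have hpi := Real.pi_pos
  have := (Real.cos_eq_one_iff_of_lt_of_lt (by linarith) (by linarith)).1 h1
  linarith

/-- The interval `(-π/2, π)` is invariant. -/
lemma angleFlow_mem (t : ℝ) {φ : ℝ} (hφ : φ ∈ Set.Ioo (-(Real.pi / 2)) Real.pi) :
    angleFlow t φ ∈ Set.Ioo (-(Real.pi / 2)) Real.pi := by
  obtain ⟨r, hr, hc, hs⟩ := angleFlow_direction t φ
  have a1 := angleFlow_lt t φ
  have a2 := lt_angleFlow t φ
  have hpi := Real.pi_pos
  obtain ⟨l, u⟩ := hφ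
  constructor
  · by_contra! h
    have h0 : φ < 0 := by linarith
    have hcp : 0 < Real.cos (angleFlow t φ) := by
      rw [hc]; exact mul_pos hr (Real.cos_pos_of_mem_Ioo ⟨l, by linarith⟩)
    have := Real.cos_nonpos_of_pi_div_two_le_of_le (x := -angleFlow t φ) (by linarith)
      (by linarith)
    rw [Real.cos_neg] at this
    linarith
  · by_contra! h
    have h0 : Real.pi / 2 < φ := by linarith
    have hsp : 0 < Real.sin (angleFlow t φ) := by
      rw [hs]
      exact mul_pos hr (mul_pos (Real.exp_pos t) (Real.sin_pos_of_pos_of_lt_pi (by linarith) u))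
    have := Real.sin_nonneg_of_nonneg_of_le_pi (x := angleFlow t φ - Real.pi) (by linarith)
      (by linarith)
    rw [Real.sin_sub_pi] at this
    linarith

lemma angleFlow_eq_of_cross (t : ℝ) {φ : ℝ} (h : Real.sin φ * Real.cos φ = 0) :
    angleFlow t φ = φ := by
  simp [angleFlow, angleCross, h]

lemma eq_of_angleFlow_one_eq {φ : ℝ} (hφ : φ ∈ Set.Ioo (-(Real.pi / 2)) Real.pi)
    (h : angleFlow 1 φ = φ) : φ = 0 ∨ φ = Real.pi / 2 := by
  have hpi := Real.pi_pos
  have h1 : Real.arctan (angleCross 1 φ / angleDot 1 φ) = 0 := by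
    unfold angleFlow at h; linarith
  rw [Real.arctan_eq_zero_iff, div_eq_zero_iff, or_iff_left (angleDot_pos 1 φ).ne',
    angleCross, mul_eq_zero] at h1
  have he : Real.exp 1 - 1 ≠ 0 := by
    have := Real.add_one_lt_exp (one_ne_zero)
    linarith
  rcases mul_eq_zero.1 (h1.resolve_left he) with h2 | h2
  · left
    exact (Real.sin_eq_zero_iff_of_lt_of_lt (by linarith [hφ.1]) hφ.2).1 h2
  · right
    have h3 : Real.sin (φ - Real.pi / 2) = 0 := by rw [Real.sin_sub_pi_div_two, h2, neg_zero]
    have := (Real.sin_eq_zero_iff_of_lt_of_lt (by linarith [hφ.1]) (by linarith [hφ.2])).1 h3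
    linarith

/-! ### A flow on the line with two equilibria -/

/-- A diffeomorphism from `ℝ` onto the interval `(-π/2, π)`. -/
def toAngle (x : ℝ) : ℝ := 3 / 2 * Real.arctan x + Real.pi / 4

/-- The inverse of `toAngle` on `(-π/2, π)`. -/
def ofAngle (φ : ℝ) : ℝ := Real.tan (2 / 3 * (φ - Real.pi / 4))

lemma toAngle_mem (x : ℝ) : toAngle x ∈ Set.Ioo (-(Real.pi / 2)) Real.pi := by
  have h1 := Real.arctan_lt_pi_div_two x
  have h2 := Real.neg_pi_div_two_lt_arctan x
  unfold toAngle
  constructor <;> linarith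

lemma ofAngle_toAngle (x : ℝ) : ofAngle (toAngle x) = x := by
  have : 2 / 3 * (toAngle x - Real.pi / 4) = Real.arctan x := by unfold toAngle; ring
  rw [ofAngle, this, Real.tan_arctan]

lemma toAngle_ofAngle {φ : ℝ} (hφ : φ ∈ Set.Ioo (-(Real.pi / 2)) Real.pi) :
    toAngle (ofAngle φ) = φ := by
  rw [toAngle, ofAngle, Real.arctan_tan (by linarith [hφ.1]) (by linarith [hφ.2])]
  ring

/-- The restriction of `angleFlow` to `(-π/2, π)`, transported to `ℝ`. -/
def twoPointFlow (t x : ℝ) : ℝ := ofAngle (angleFlow t (toAngle x))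

lemma toAngle_twoPointFlow (t x : ℝ) :
    toAngle (twoPointFlow t x) = angleFlow t (toAngle x) :=
  toAngle_ofAngle (angleFlow_mem t (toAngle_mem x))

lemma twoPointFlow_zero_left (x : ℝ) : twoPointFlow 0 x = x := by
  rw [twoPointFlow, angleFlow_zero_left, ofAngle_toAngle]

lemma twoPointFlow_add (t s x : ℝ) :
    twoPointFlow (t + s) x = twoPointFlow t (twoPointFlow s x) := by
  rw [twoPointFlow, angleFlow_add, ← toAngle_twoPointFlow, twoPointFlow.eq_def t]

lemma twoPointFlow_contDiff : ContDiff ℝ (⊤ : ℕ∞) (fun p : ℝ × ℝ => twoPointFlow p.1 p.2) := by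
  have hg : ContDiff ℝ (⊤ : ℕ∞) (fun p : ℝ × ℝ => toAngle p.2) := by
    unfold toAngle
    exact (contDiff_const.mul contDiff_snd.arctan).add contDiff_const
  have hP : ContDiff ℝ (⊤ : ℕ∞) (fun p : ℝ × ℝ => angleFlow p.1 (toAngle p.2)) :=
    angleFlow_contDiff.comp (contDiff_fst.prodMk hg)
  have hL : ContDiff ℝ (⊤ : ℕ∞)
      (fun p : ℝ × ℝ => 2 / 3 * (angleFlow p.1 (toAngle p.2) - Real.pi / 4)) :=
    contDiff_const.mul (hP.sub contDiff_const)
  rw [contDiff_iff_contDiffAt]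
  intro p
  have hm := angleFlow_mem p.1 (toAngle_mem p.2)
  have hcos : Real.cos (2 / 3 * (angleFlow p.1 (toAngle p.2) - Real.pi / 4)) ≠ 0 :=
    (Real.cos_pos_of_mem_Ioo ⟨by linarith [hm.1], by linarith [hm.2]⟩).ne'
  exact ContDiffAt.comp (g := Real.tan) p (Real.contDiffAt_tan.2 hcos) hL.contDiffAt

lemma zero_mem_angles : (0 : ℝ) ∈ Set.Ioo (-(Real.pi / 2)) Real.pi := by
  have := Real.pi_pos
  constructor <;> linarith

lemma pi_div_two_mem_angles : Real.pi / 2 ∈ Set.Ioo (-(Real.pi / 2)) Real.pi := by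
  have := Real.pi_pos
  constructor <;> linarith

lemma twoPointFlow_ofAngle_zero (t : ℝ) : twoPointFlow t (ofAngle 0) = ofAngle 0 := by
  rw [twoPointFlow, toAngle_ofAngle zero_mem_angles, angleFlow_eq_of_cross t (by simp)]

lemma twoPointFlow_ofAngle_pi_div_two (t : ℝ) :
    twoPointFlow t (ofAngle (Real.pi / 2)) = ofAngle (Real.pi / 2) := by
  rw [twoPointFlow, toAngle_ofAngle pi_div_two_mem_angles, angleFlow_eq_of_cross t (by simp)]

lemma eq_of_twoPointFlow_one_eq {x : ℝ} (h : twoPointFlow 1 x = x) :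
    x = ofAngle 0 ∨ x = ofAngle (Real.pi / 2) := by
  have h1 : angleFlow 1 (toAngle x) = toAngle x := by rw [← toAngle_twoPointFlow, h]
  rcases eq_of_angleFlow_one_eq (toAngle_mem x) h1 with h2 | h2
  · left; rw [← h2, ofAngle_toAngle]
  · right; rw [← h2, ofAngle_toAngle]

lemma ofAngle_zero_ne : ofAngle 0 ≠ ofAngle (Real.pi / 2) := by
  intro h
  have h1 := congrArg toAngle h
  rw [toAngle_ofAngle zero_mem_angles, toAngle_ofAngle pi_div_two_mem_angles] at h1
  linarith [Real.pi_pos]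

/-! ### The planar flow -/

/-- The product of `twoPointFlow` and `lineFlow`. -/
def planarFlow (t : ℝ) (x : Fin 2 → ℝ) : Fin 2 → ℝ :=
  ![twoPointFlow t (x 0), lineFlow t (x 1)]

lemma planarFlow_apply_zero (t : ℝ) (x : Fin 2 → ℝ) :
    planarFlow t x 0 = twoPointFlow t (x 0) := rfl

lemma planarFlow_apply_one (t : ℝ) (x : Fin 2 → ℝ) : planarFlow t x 1 = lineFlow t (x 1) := rfl

lemma planarFlow_isSmoothFlow : IsSmoothFlow planarFlow := by
  refine ⟨?_, fun x => ?_, fun t s x => ?_⟩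
  · have h (i : Fin 2) : ContDiff ℝ (⊤ : ℕ∞) (fun p : ℝ × (Fin 2 → ℝ) => (p.1, p.2 i)) :=
      contDiff_fst.prodMk ((contDiff_apply ℝ ℝ i).comp contDiff_snd)
    rw [contDiff_pi, Fin.forall_fin_two]
    simp only [planarFlow_apply_zero, planarFlow_apply_one]
    have h0 := twoPointFlow_contDiff.comp (h 0)
    have h1 := lineFlow_contDiff.comp (h 1)
    exact ⟨h0, h1⟩
  · rw [funext_iff, Fin.forall_fin_two]
    simp only [planarFlow_apply_zero, planarFlow_apply_one]
    exact ⟨twoPointFlow_zero_left _, lineFlow_zero_left _⟩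
  · rw [funext_iff, Fin.forall_fin_two]
    simp only [planarFlow_apply_zero, planarFlow_apply_one]
    exact ⟨twoPointFlow_add t s _, lineFlow_add t s _⟩

lemma planarFlow_equilibria : {x | ∀ t, planarFlow t x = x} =
    {![ofAngle 0, 0], ![ofAngle (Real.pi / 2), 0]} := by
  ext x
  simp only [Set.mem_ofPred_eq, Set.mem_insert_iff, Set.mem_singleton_iff]
  constructor
  · intro h
    have h0 : twoPointFlow 1 (x 0) = x 0 := congrFun (h 1) 0
    have h1 : x 1 = 0 := (lineFlow_one_eq_iff _).1 (congrFun (h 1) 1)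
    refine (eq_of_twoPointFlow_one_eq h0).imp (fun h2 => ?_) fun h2 => ?_ <;>
    · ext i
      fin_cases i
      · exact h2
      · exact h1
  · rintro (rfl | rfl) t
    · simp [planarFlow, twoPointFlow_ofAngle_zero, lineFlow_zero_right]
    · simp [planarFlow, twoPointFlow_ofAngle_pi_div_two, lineFlow_zero_right]

end

/-- There is a smooth planar flow with exactly two (isolated) equilibria admitting
globally defined nonconstant smooth Koopman eigenfunctions with eigenvalues `1` and `-1`. -/
theorem statement11 :
    ∃ (Φ : ℝ → (Fin 2 → ℝ) → (Fin 2 → ℝ)) (ψp ψm : (Fin 2 → ℝ) → ℝ),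
      IsSmoothFlow Φ ∧
      (∃ a b : Fin 2 → ℝ, a ≠ b ∧ {x | ∀ t, Φ t x = x} = {a, b}) ∧
      (∀ x ∈ {x | ∀ t, Φ t x = x}, ∃ U ∈ 𝓝 x, ∀ y ∈ U, (∀ t, Φ t y = y) → y = x) ∧
      ContDiff ℝ (⊤ : ℕ∞) ψp ∧ ContDiff ℝ (⊤ : ℕ∞) ψm ∧
      (∃ x y, ψp x ≠ ψp y) ∧ (∃ x y, ψm x ≠ ψm y) ∧
      (∀ (t : ℝ) (x : Fin 2 → ℝ), ψp (Φ t x) = Real.exp t * ψp x) ∧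
      (∀ (t : ℝ) (x : Fin 2 → ℝ), ψm (Φ t x) = Real.exp (-t) * ψm x) := by
  refine ⟨planarFlow, fun x => lineEigen (x 1), fun x => lineEigen (-x 1),
    planarFlow_isSmoothFlow, ⟨_, _, fun h => ofAngle_zero_ne (congrFun h 0),
      planarFlow_equilibria⟩, fun x _ => ?_,
    lineEigen_contDiff.comp (contDiff_apply ℝ ℝ (1 : Fin 2)),
    lineEigen_contDiff.comp (contDiff_apply ℝ ℝ (1 : Fin 2)).neg,
    ⟨![0, 1], ![0, -1], by simpa using lineEigen_one_ne⟩,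
    ⟨![0, -1], ![0, 1], by simpa using lineEigen_one_ne⟩,
    fun t x => lineEigen_flow t (x 1), fun t x => lineEigen_neg_flow t (x 1)⟩
  -- The equilibrium set is finite, so removing the equilibria other than `x` leaves an open set.
  have hfin : ({x | ∀ t, planarFlow t x = x} \ {x}).Finite := by
    rw [planarFlow_equilibria]
    exact (Set.toFinite _).subset Set.sdiff_subset
  refine ⟨_, hfin.isClosed.isOpen_compl.mem_nhds (fun h => h.2 rfl), fun y hy hfix => ?_⟩
  by_contra hne
  exact hy ⟨hfix, hne⟩
end

section
/- There exist a smooth flow Φ on ℝ² having exactly two equilibria, both isolated, and a finite-dimensional linear subspace W of the space of smooth real-valued functions on ℝ² such that W contains the two coordinate functions x ↦ x₁ and x ↦ x₂ (W "contains the state") and W is invariant under the Koopman operators: for every ψ ∈ W and every t ∈ ℝ, the function ψ ∘ Φ^t belongs to W. -/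
/-!
The example is built from two copies of the linear saddle `p' = q`, `q' = p`, which has the
conserved quantity `p ^ 2 - q ^ 2`. Each copy is restricted to the invariant region
`q ≥ -√(1 + p ^ 2)`, and the two copies are glued along their common boundary orbit
`q = -√(1 + p ^ 2)`. The result is a smooth plane carrying a flow with exactly two equilibria, the
two saddle points. On it lives a smooth flow-invariant function `g` that is `1` on most of the
first copy, `-1` on most of the second, and changes sign across the gluing orbit; near that orbit it
is a smooth odd function of a signed square root of the invariant `1 + p ^ 2 - q ^ 2`.

The state coordinates are `x₁ = p` and `x₂ = g * (q + 2 * (1 + p ^ 2))`. In the coordinates `(p, s)`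
on the glued plane given by `q = √(1 + p ^ 2) * (s ^ 2 - 1)`, with the sign of `s` selecting the
copy, `x₂` has positive `s`-derivative and is onto for every fixed `p`. The inverse function theorem
thus makes `(p, s) ↦ (x₁, x₂)` a diffeomorphism of the plane (`exists_inverse`), and `p, q, g`
become smooth functions of the state. As `p` and `q` evolve linearly and `g` is constant along the
flow (`exists_lift`), the span of `p, q, g, g p, g q, g p², g p q, g q²` is Koopman invariant, and it
contains `x₁` and `x₂`.
-/

open Filter Topology Function

/-! ### A smooth odd step function -/

/-- A smooth odd nondecreasing step, equal to `±1` for `|w| ≥ 1/2` and with slope `1` at `0`. -/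
noncomputable def step (w : ℝ) : ℝ := w / √(w ^ 2 + (1 - Real.smoothTransition (4 * w ^ 2)))

lemma step_radicand_pos (w : ℝ) : 0 < w ^ 2 + (1 - Real.smoothTransition (4 * w ^ 2)) := by
  rcases eq_or_ne w 0 with rfl | hw
  · simp
  · have := Real.smoothTransition.le_one (4 * w ^ 2)
    have : 0 < w ^ 2 := by positivity
    linarith

lemma step_radicand_contDiff :
    ContDiff ℝ (⊤ : ℕ∞) fun w : ℝ => √(w ^ 2 + (1 - Real.smoothTransition (4 * w ^ 2))) := by
  refine ContDiff.sqrt ?_ fun w => (step_radicand_pos w).ne'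
  have h : ContDiff ℝ (⊤ : ℕ∞) fun w : ℝ => Real.smoothTransition (4 * w ^ 2) :=
    Real.smoothTransition.contDiff.comp (by fun_prop)
  fun_prop

lemma step_contDiff : ContDiff ℝ (⊤ : ℕ∞) step :=
  contDiff_id.div step_radicand_contDiff fun w => (Real.sqrt_pos.2 (step_radicand_pos w)).ne'

lemma step_neg (w : ℝ) : step (-w) = -step w := by
  simp [step, neg_div]

lemma step_pos {w : ℝ} (hw : 0 < w) : 0 < step w :=
  div_pos hw (Real.sqrt_pos.2 (step_radicand_pos w))

lemma step_eq_one {w : ℝ} (hw : 1 / 2 ≤ w) : step w = 1 := by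
  have h : Real.smoothTransition (4 * w ^ 2) = 1 :=
    Real.smoothTransition.one_of_one_le (by nlinarith)
  have hw0 : 0 < w := by linarith
  simp [step, h, Real.sqrt_sq hw0.le, hw0.ne']

lemma step_monotone : Monotone step := by
  refine monotone_of_odd_of_monotoneOn_nonneg step_neg ?_
  intro a ha b hb hab
  rw [Set.mem_Ici] at ha hb
  have hA := step_radicand_pos a
  have hB := step_radicand_pos b
  have hT : Real.smoothTransition (4 * a ^ 2) ≤ Real.smoothTransition (4 * b ^ 2) :=
    Real.smoothTransition.monotone (by nlinarith)
  have hT1 := Real.smoothTransition.le_one (4 * b ^ 2)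
  have hab2 : a ^ 2 ≤ b ^ 2 := by nlinarith
  unfold step
  rw [div_le_div_iff₀ (Real.sqrt_pos.2 hA) (Real.sqrt_pos.2 hB)]
  refine abs_le_of_sq_le_sq' ?_ (by positivity) |>.2
  rw [mul_pow, mul_pow, Real.sq_sqrt hA.le, Real.sq_sqrt hB.le]
  have : a ^ 2 * (1 - Real.smoothTransition (4 * b ^ 2)) ≤
      b ^ 2 * (1 - Real.smoothTransition (4 * a ^ 2)) :=
    mul_le_mul hab2 (by linarith) (by linarith) (by positivity)
  nlinarith

lemma step_hasDerivAt_zero : HasDerivAt step 1 0 := by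
  have hk : ContDiff ℝ (⊤ : ℕ∞) fun w : ℝ =>
      (√(w ^ 2 + (1 - Real.smoothTransition (4 * w ^ 2))))⁻¹ :=
    step_radicand_contDiff.inv fun w => (Real.sqrt_pos.2 (step_radicand_pos w)).ne'
  have h := (hasDerivAt_id (0 : ℝ)).mul (hk.differentiable (by simp) 0).hasDerivAt
  refine (h.congr_deriv (by simp)).congr_of_eventuallyEq ?_
  exact Eventually.of_forall fun w => div_eq_mul_inv _ _

/-! ### The glued plane in the coordinates `(p, s)` -/

/-- The orbit `q = -rad p` is the boundary along which the two copies of the saddle are glued. -/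
noncomputable def rad (p : ℝ) : ℝ := √(1 + p ^ 2)

lemma rad_sq (p : ℝ) : rad p ^ 2 = 1 + p ^ 2 := Real.sq_sqrt (by positivity)

lemma one_le_rad (p : ℝ) : 1 ≤ rad p := Real.one_le_sqrt.2 (by nlinarith)

lemma rad_contDiff : ContDiff ℝ (⊤ : ℕ∞) rad :=
  ContDiff.sqrt (by fun_prop) fun p => by positivity

/-- The saddle coordinate `q` at the point `(p, s)`; it is even in `s`, the sign of `s` selecting one
of the two copies. -/
noncomputable def qf (p s : ℝ) : ℝ := rad p * (s ^ 2 - 1)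

/-- The flow-invariant function `g` in the coordinates `(p, s)`: it is the sign of `s`
for `|s| ≥ 1 / 2`, and for `|s| < 1` it is `step` of the signed square root
`rad p * s * √(2 - s ^ 2)` of `1 + p ^ 2 - q ^ 2`. -/
noncomputable def gf (p s : ℝ) : ℝ :=
  if 1 / 2 < s then 1 else if s < -(1 / 2) then -1 else step (rad p * (s * √(2 - s ^ 2)))

lemma gf_of_gt {p s : ℝ} (h : 1 / 2 < s) : gf p s = 1 := if_pos h

lemma gf_of_lt {p s : ℝ} (h : s < -(1 / 2)) : gf p s = -1 := by
  rw [gf, if_neg (by linarith), if_pos h]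

/-- The argument of `step` is at least `1 / 2` on `1 / 2 ≤ s < 1`, which makes the branches of `gf`
agree there. -/
lemma half_le_arg {p s : ℝ} (h1 : 1 / 2 ≤ s) (h2 : s < 1) :
    1 / 2 ≤ rad p * (s * √(2 - s ^ 2)) := by
  have h3 : 1 ≤ √(2 - s ^ 2) := Real.one_le_sqrt.2 (by nlinarith)
  have h4 : 1 / 2 ≤ s * √(2 - s ^ 2) := by nlinarith
  nlinarith [one_le_rad p]

lemma gf_neg (p s : ℝ) : gf p (-s) = -gf p s := by
  rcases lt_or_ge (1 / 2) s with h | h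
  · rw [gf_of_gt h, gf_of_lt (by linarith)]
  rcases lt_or_ge s (-(1 / 2)) with h' | h'
  · rw [gf_of_lt h', gf_of_gt (by linarith), neg_neg]
  · rw [gf, gf, if_neg (by linarith), if_neg (by linarith), if_neg (by linarith),
      if_neg (by linarith), ← step_neg]
    congr 1
    rw [neg_sq]
    ring

lemma gf_of_abs_lt {p s : ℝ} (h1 : -1 < s) (h2 : s < 1) :
    gf p s = step (rad p * (s * √(2 - s ^ 2))) := by
  rcases lt_or_ge (1 / 2) s with h | h
  · rw [gf_of_gt h, step_eq_one (half_le_arg h.le h2)]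
  rcases lt_or_ge s (-(1 / 2)) with h' | h'
  · have h3 := half_le_arg (p := p) (s := -s) (by linarith) (by linarith)
    rw [neg_sq] at h3
    rw [gf_of_lt h', ← neg_neg (step _), ← step_neg, step_eq_one]
    linarith
  · rw [gf, if_neg (by linarith), if_neg (by linarith)]

lemma gf_contDiff : ContDiff ℝ (⊤ : ℕ∞) fun z : ℝ × ℝ => gf z.1 z.2 := by
  rw [contDiff_iff_contDiffAt]
  rintro ⟨p, s⟩
  have c2 : Continuous fun z : ℝ × ℝ => z.2 := continuous_snd
  rcases lt_or_ge (1 / 2) s with h | h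
  · refine (contDiffAt_const (c := (1 : ℝ))).congr_of_eventuallyEq ?_
    filter_upwards [(isOpen_lt continuous_const c2).mem_nhds h] with z hz using gf_of_gt hz
  rcases lt_or_ge s (-(1 / 2)) with h' | h'
  · refine (contDiffAt_const (c := (-1 : ℝ))).congr_of_eventuallyEq ?_
    filter_upwards [(isOpen_lt c2 continuous_const).mem_nhds h'] with z hz using gf_of_lt hz
  have h1 : -1 < s := by linarith
  have h2 : s < 1 := by linarith
  have key : ContDiffAt ℝ (⊤ : ℕ∞)
      (fun z : ℝ × ℝ => step (rad z.1 * (z.2 * √(2 - z.2 ^ 2)))) (p, s) := by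
    refine step_contDiff.contDiffAt.comp _ (ContDiffAt.mul ?_ (ContDiffAt.mul ?_ ?_))
    · exact (rad_contDiff.comp contDiff_fst).contDiffAt
    · exact contDiffAt_snd
    · refine ContDiffAt.sqrt (by fun_prop) ?_
      have : 0 < 2 - s ^ 2 := by nlinarith
      exact this.ne'
  refine key.congr_of_eventuallyEq ?_
  filter_upwards [(isOpen_lt continuous_const c2).mem_nhds h1,
    (isOpen_lt c2 continuous_const).mem_nhds h2] with z hz hz' using gf_of_abs_lt hz hz'

lemma gf_pos {p s : ℝ} (hs : 0 < s) : 0 < gf p s := by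
  rcases lt_or_ge (1 / 2) s with h | h
  · rw [gf_of_gt h]; exact one_pos
  · rw [gf_of_abs_lt (by linarith) (by linarith)]
    have := one_le_rad p
    have : 0 < √(2 - s ^ 2) := Real.sqrt_pos.2 (by nlinarith)
    exact step_pos (by positivity)

lemma gf_zero (p : ℝ) : gf p 0 = 0 := by
  have := gf_neg p 0
  rw [neg_zero] at this
  linarith

lemma gf_mul_self_pos {p s : ℝ} (hs : s ≠ 0) : 0 < gf p s * s := by
  rcases hs.lt_or_gt with h | h
  · have := gf_pos (p := p) (neg_pos.2 h)
    rw [gf_neg] at this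
    nlinarith
  · exact mul_pos (gf_pos h) h

lemma gf_hasDerivAt (p s : ℝ) : ∃ d, 0 ≤ d ∧ (s = 0 → 0 < d) ∧ HasDerivAt (gf p) d s := by
  rcases lt_or_ge (1 / 2) s with h | h
  · refine ⟨0, le_rfl, fun h0 => by linarith, (hasDerivAt_const s (1 : ℝ)).congr_of_eventuallyEq ?_⟩
    filter_upwards [lt_mem_nhds h] with z hz using gf_of_gt hz
  rcases lt_or_ge s (-(1 / 2)) with h' | h'
  · refine ⟨0, le_rfl, fun h0 => by linarith,
      (hasDerivAt_const s (-1 : ℝ)).congr_of_eventuallyEq ?_⟩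
    filter_upwards [gt_mem_nhds h'] with z hz using gf_of_lt hz
  have h1 : -1 < s := by linarith
  have h2 : s < 1 := by linarith
  have hr : 0 < 2 - s ^ 2 := by nlinarith
  have hrt := Real.sqrt_pos.2 hr
  have hsq : HasDerivAt (fun s : ℝ => √(2 - s ^ 2)) (-(2 * s) / (2 * √(2 - s ^ 2))) s := by
    have := ((hasDerivAt_pow 2 s).const_sub 2).sqrt hr.ne'
    simpa using this
  have harg : HasDerivAt (fun s : ℝ => rad p * (s * √(2 - s ^ 2)))
      (rad p * (1 * √(2 - s ^ 2) + s * (-(2 * s) / (2 * √(2 - s ^ 2))))) s :=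
    ((hasDerivAt_id s).mul hsq).const_mul _
  have hpos : 0 < rad p * (1 * √(2 - s ^ 2) + s * (-(2 * s) / (2 * √(2 - s ^ 2)))) := by
    have e : 1 * √(2 - s ^ 2) + s * (-(2 * s) / (2 * √(2 - s ^ 2))) =
        (2 - 2 * s ^ 2) / √(2 - s ^ 2) := by
      field_simp
      rw [Real.sq_sqrt hr.le]
      ring
    rw [e]
    have := one_le_rad p
    have : 0 < 2 - 2 * s ^ 2 := by nlinarith
    positivity
  have hst : HasDerivAt step (deriv step (rad p * (s * √(2 - s ^ 2))))
      (rad p * (s * √(2 - s ^ 2))) :=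
    (step_contDiff.differentiable (by simp) _).hasDerivAt
  refine ⟨_, mul_nonneg step_monotone.deriv_nonneg hpos.le, ?_,
    (hst.comp s harg).congr_of_eventuallyEq ?_⟩
  · rintro rfl
    refine mul_pos ?_ hpos
    rw [zero_mul, mul_zero, step_hasDerivAt_zero.deriv]
    exact one_pos
  · filter_upwards [lt_mem_nhds h1, gt_mem_nhds h2] with z hz hz' using gf_of_abs_lt hz hz'

/-! ### The state coordinates -/

/-- The second state coordinate, as a function of `(p, s)`. -/
noncomputable def yf (p s : ℝ) : ℝ := gf p s * (qf p s + 2 * (1 + p ^ 2))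

lemma qf_contDiff : ContDiff ℝ (⊤ : ℕ∞) fun z : ℝ × ℝ => qf z.1 z.2 :=
  (rad_contDiff.comp contDiff_fst).mul (by fun_prop)

lemma yf_contDiff : ContDiff ℝ (⊤ : ℕ∞) fun z : ℝ × ℝ => yf z.1 z.2 :=
  gf_contDiff.mul (qf_contDiff.add (by fun_prop))

lemma yf_neg (p s : ℝ) : yf p (-s) = -yf p s := by
  simp [yf, gf_neg, qf]

lemma sq_lt_factor (p s : ℝ) : s ^ 2 < qf p s + 2 * (1 + p ^ 2) := by
  rw [qf, ← rad_sq]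
  nlinarith [one_le_rad p, sq_nonneg s]

lemma yf_hasDerivAt (p s : ℝ) : ∃ d, 0 < d ∧ HasDerivAt (yf p) d s := by
  obtain ⟨d, hd, hd0, h⟩ := gf_hasDerivAt p s
  have hq : HasDerivAt (fun s => qf p s + 2 * (1 + p ^ 2)) (rad p * (2 * s)) s := by
    have := (((hasDerivAt_pow 2 s).sub_const 1).const_mul (rad p)).add_const (2 * (1 + p ^ 2))
    simpa [qf] using this
  refine ⟨_, ?_, h.mul hq⟩
  have hk : 0 < qf p s + 2 * (1 + p ^ 2) := (sq_nonneg s).trans_lt (sq_lt_factor p s)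
  have hr := one_le_rad p
  rcases eq_or_ne s 0 with rfl | hs
  · have := mul_pos (hd0 rfl) hk
    simpa using this
  · have h1 := gf_mul_self_pos (p := p) hs
    have h2 : 0 < gf p s * (rad p * (2 * s)) := by
      have : 0 < 2 * rad p * (gf p s * s) := by positivity
      linarith
    have := mul_nonneg hd hk.le
    linarith

lemma yf_strictMono (p : ℝ) : StrictMono (yf p) := by
  refine strictMono_of_deriv_pos fun s => ?_
  obtain ⟨d, hd, h⟩ := yf_hasDerivAt p s
  rwa [h.deriv]

lemma yf_surjective (p : ℝ) : Surjective (yf p) := by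
  have htop : Tendsto (yf p) atTop atTop := by
    refine tendsto_atTop_mono' atTop ?_ (tendsto_pow_atTop (two_ne_zero))
    filter_upwards [eventually_gt_atTop (1 / 2)] with s hs
    rw [yf, gf_of_gt hs, one_mul]
    exact (sq_lt_factor p s).le
  have hbot : Tendsto (yf p) atBot atBot := by
    have := tendsto_neg_atTop_atBot.comp (htop.comp tendsto_neg_atBot_atTop)
    refine this.congr fun s => ?_
    simp [yf_neg]
  have hc : Continuous (yf p) :=
    yf_contDiff.continuous.comp (by fun_prop : Continuous fun s : ℝ => (p, s))
  exact hc.surjective htop hbot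

/-- The change of coordinates `(p, s) ↦ (p, yf p s)` is a diffeomorphism of the plane; `S` is the
second component of its inverse. -/
lemma exists_inverse : ∃ S : ℝ × ℝ → ℝ, ContDiff ℝ (⊤ : ℕ∞) S ∧ ∀ z, yf z.1 (S z) = z.2 := by
  let f : ℝ × ℝ → ℝ × ℝ := fun z => (z.1, yf z.1 z.2)
  have hf : ContDiff ℝ (⊤ : ℕ∞) f := contDiff_fst.prodMk yf_contDiff
  have hbij : Bijective f := by
    constructor
    · rintro ⟨p, s⟩ ⟨p', s'⟩ h
      have h1 : p = p' := congrArg Prod.fst h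
      have h2 : yf p s = yf p' s' := congrArg Prod.snd h
      subst h1
      rw [(yf_strictMono p).injective h2]
    · rintro ⟨x, y⟩
      obtain ⟨s, hs⟩ := yf_surjective x y
      exact ⟨(x, s), Prod.ext rfl hs⟩
  have hstrict : ∀ z, HasStrictFDerivAt f (fderiv ℝ f z) z := fun z =>
    hf.contDiffAt.hasStrictFDerivAt (by simp)
  have hinj : ∀ z, Injective (fderiv ℝ f z : ℝ × ℝ →ₗ[ℝ] ℝ × ℝ) := by
    intro z
    have hy := (yf_contDiff.differentiable (by simp) z).hasFDerivAt
    have hz : HasFDerivAt f _ z := hasFDerivAt_fst.prodMk hy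
    obtain ⟨d, hd, h⟩ := yf_hasDerivAt z.1 z.2
    have hcomp : HasDerivAt (yf z.1) (fderiv ℝ (fun z : ℝ × ℝ => yf z.1 z.2) z (0, 1)) z.2 :=
      HasFDerivAt.comp_hasDerivAt (f := fun s : ℝ => (z.1, s)) z.2 hy
        ((hasDerivAt_const z.2 z.1).prodMk (hasDerivAt_id z.2))
    have hd' := h.unique hcomp
    rw [hz.fderiv]
    refine (injective_iff_map_eq_zero _).2 ?_
    rintro ⟨a, b⟩ hab
    have ha : a = 0 := congrArg Prod.fst hab
    have hb : fderiv ℝ (fun z : ℝ × ℝ => yf z.1 z.2) z (a, b) = 0 := congrArg Prod.snd hab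
    have e : ((a, b) : ℝ × ℝ) = b • ((0 : ℝ), (1 : ℝ)) := by simp [ha]
    rw [e, map_smul, ← hd', smul_eq_mul, mul_eq_zero] at hb
    rw [ha, hb.resolve_right hd.ne']
    rfl
  let L : ℝ × ℝ → (ℝ × ℝ) ≃L[ℝ] (ℝ × ℝ) := fun z =>
    (LinearEquiv.ofInjectiveEndo _ (hinj z)).toContinuousLinearEquiv
  have hL : ∀ z, (L z : ℝ × ℝ →L[ℝ] ℝ × ℝ) = fderiv ℝ f z := fun z => by
    ext <;> rfl
  have hopen : IsOpenMap f :=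
    isOpenMap_of_hasStrictFDerivAt_equiv (f' := L) fun z => by rw [hL]; exact hstrict z
  let e := (Equiv.ofBijective f hbij).toHomeomorphOfContinuousOpen hf.continuous hopen
  have hes : ContDiff ℝ (⊤ : ℕ∞) e.symm :=
    e.contDiff_symm (f₀' := L) (fun z => by rw [hL]; exact (hstrict z).hasFDerivAt) hf
  refine ⟨fun z => (e.symm z).2, hes.snd, fun z => ?_⟩
  have h : f (e.symm z) = z := e.apply_symm_apply z
  have h1 : (f (e.symm z)).1 = z.1 := by rw [h]
  have h2 : (f (e.symm z)).2 = z.2 := by rw [h]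
  change (e.symm z).1 = z.1 at h1
  change yf (e.symm z).1 (e.symm z).2 = z.2 at h2
  rwa [h1] at h2

/-! ### The lifted saddle flow -/

/-- On the half `s ≥ 0`, `g` depends only on `1 + p ^ 2 - q ^ 2` and on the sign of `q`. -/
lemma gf_eq_of_nonneg {p s : ℝ} (hs : 0 ≤ s) :
    gf p s = if qf p s < 0 then step √(1 + p ^ 2 - qf p s ^ 2) else 1 := by
  have hr := one_le_rad p
  rcases lt_or_ge s 1 with h | h
  · have hq : qf p s < 0 := mul_neg_of_pos_of_neg (by linarith) (by nlinarith)
    have h2 : 0 ≤ 2 - s ^ 2 := by nlinarith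
    rw [gf_of_abs_lt (by linarith) h, if_pos hq]
    congr 1
    have e : 1 + p ^ 2 - qf p s ^ 2 = (rad p * (s * √(2 - s ^ 2))) ^ 2 := by
      rw [mul_pow, mul_pow, Real.sq_sqrt h2, qf, ← rad_sq]
      ring
    rw [e, Real.sqrt_sq (by positivity)]
  · have hq : 0 ≤ qf p s := mul_nonneg (by linarith) (by nlinarith)
    rw [gf_of_gt (by linarith), if_neg hq.not_gt]

/-- The backward light cone `q < -|p|` is preserved by hyperbolic rotations. -/
lemma boost_neg {p q : ℝ} (t : ℝ) (hq : q < 0) (h : p ^ 2 < q ^ 2) :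
    p * Real.sinh t + q * Real.cosh t < 0 := by
  have h1 : |p| < -q := by
    rw [← abs_of_neg hq]
    exact sq_lt_sq.1 h
  obtain ⟨h2, h3⟩ := abs_lt.1 h1
  have e1 := Real.exp_pos t
  have e2 := Real.exp_pos (-t)
  rw [Real.sinh_eq, Real.cosh_eq]
  have := mul_pos e1 (by linarith : 0 < -q - p)
  have := mul_pos e2 (by linarith : 0 < -q + p)
  linarith

lemma boost_sq (p q t : ℝ) : (p * Real.sinh t + q * Real.cosh t) ^ 2 -
    (p * Real.cosh t + q * Real.sinh t) ^ 2 = q ^ 2 - p ^ 2 := by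
  have := Real.cosh_sq t
  linear_combination (q ^ 2 - p ^ 2) * this

/-- The saddle flow on `(p, q)` lifts to the coordinates `(p, s)`, and the lift preserves `g`. -/
lemma exists_lift (p s t : ℝ) : ∃ s',
    qf (p * Real.cosh t + qf p s * Real.sinh t) s' = p * Real.sinh t + qf p s * Real.cosh t ∧
    gf (p * Real.cosh t + qf p s * Real.sinh t) s' = gf p s := by
  -- By the symmetry `s ↦ -s` it suffices to treat `s ≥ 0`.
  wlog hs : 0 ≤ s generalizing s
  · obtain ⟨s', h1, h2⟩ := this (-s) (by linarith)
    have e : qf p (-s) = qf p s := by simp [qf]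
    rw [e] at h1 h2
    refine ⟨-s', ?_, ?_⟩
    · rw [← h1]; simp [qf]
    · rw [gf_neg, h2, gf_neg, neg_neg]
  have hge : -rad p ≤ qf p s := by
    rw [qf]; nlinarith [one_le_rad p, sq_nonneg s]
  have hsq := boost_sq p (qf p s) t
  have hg := gf_eq_of_nonneg (p := p) hs
  generalize qf p s = q at *
  have hback : (p * Real.cosh t + q * Real.sinh t) * Real.sinh (-t) +
      (p * Real.sinh t + q * Real.cosh t) * Real.cosh (-t) = q := by
    rw [Real.sinh_neg, Real.cosh_neg]
    linear_combination q * Real.cosh_sq t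
  have hfwd := boost_neg (p := p) (q := q) t
  set P := p * Real.cosh t + q * Real.sinh t
  set Q := p * Real.sinh t + q * Real.cosh t
  have hbwd := boost_neg (p := P) (q := Q) (-t)
  rw [hback] at hbwd
  have hr := one_le_rad p
  have hR := one_le_rad P
  have hr2 := rad_sq p
  have hR2 := rad_sq P
  -- If `Q` fell below the boundary orbit, flowing back would put `q` below it as well.
  have hQ : -rad P ≤ Q := by
    by_contra! hlt
    have hq := hbwd (by linarith) (by nlinarith)
    nlinarith
  have hnn : 0 ≤ 1 + Q / rad P := by
    have : -1 ≤ Q / rad P := by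
      rw [le_div_iff₀ (by linarith)]
      linarith
    linarith
  have hqf : qf P √(1 + Q / rad P) = Q := by
    rw [qf, Real.sq_sqrt hnn]
    field_simp
    ring
  refine ⟨√(1 + Q / rad P), hqf, ?_⟩
  rw [gf_eq_of_nonneg (Real.sqrt_nonneg _), hqf, hg]
  have hD : 1 + P ^ 2 - Q ^ 2 = 1 + p ^ 2 - q ^ 2 := by linarith
  rw [hD]
  -- Where `1 + p ^ 2 - q ^ 2 < 1 / 4` the point lies in a light cone, so the sign of `q` is
  -- preserved; elsewhere `g = 1` whatever that sign is.
  rcases lt_or_ge (1 + p ^ 2 - q ^ 2) (1 / 4) with h | h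
  · have hiff : Q < 0 ↔ q < 0 :=
      ⟨fun h0 => hbwd h0 (by linarith), fun h0 => hfwd h0 (by linarith)⟩
    simp only [hiff]
  · have h1 : step √(1 + p ^ 2 - q ^ 2) = 1 := by
      refine step_eq_one (Real.le_sqrt_of_sq_le ?_)
      linarith
    simp [h1]

/-- The observables `q` and `g` as smooth functions of the state `x`: they reconstruct `x 1`, evolve
by the saddle flow (respectively stay constant) along the flow, and exactly two states have
`x 0 = q x = 0`. -/
lemma exists_observables : ∃ q g : (Fin 2 → ℝ) → ℝ,
    ContDiff ℝ (⊤ : ℕ∞) q ∧ ContDiff ℝ (⊤ : ℕ∞) g ∧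
    (∀ x, x 1 = g x * (q x + 2 * (1 + x 0 ^ 2))) ∧
    (∀ x t y, y 0 = x 0 * Real.cosh t + q x * Real.sinh t →
      y 1 = g x * (x 0 * Real.sinh t + q x * Real.cosh t + 2 * (1 + y 0 ^ 2)) →
      q y = x 0 * Real.sinh t + q x * Real.cosh t ∧ g y = g x) ∧
    (∀ x, x 0 = 0 ∧ q x = 0 ↔ x = ![0, 2] ∨ x = ![0, -2]) := by
  obtain ⟨S, hS, hy⟩ := exists_inverse
  have hpair : ContDiff ℝ (⊤ : ℕ∞) fun x : Fin 2 → ℝ => (x 0, x 1) := by fun_prop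
  have hS' : ContDiff ℝ (⊤ : ℕ∞) fun x : Fin 2 → ℝ => (x 0, S (x 0, x 1)) :=
    (by fun_prop : ContDiff ℝ (⊤ : ℕ∞) fun x : Fin 2 → ℝ => x 0).prodMk (hS.comp hpair)
  have huniq : ∀ x s, yf x.1 s = x.2 → S x = s := fun x s h =>
    (yf_strictMono x.1).injective ((hy x).trans h.symm)
  refine ⟨fun x => qf (x 0) (S (x 0, x 1)), fun x => gf (x 0) (S (x 0, x 1)),
    qf_contDiff.comp hS', gf_contDiff.comp hS', fun x => (hy (x 0, x 1)).symm, ?_, ?_⟩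
  · intro x t y h0 h1
    obtain ⟨s', hq, hg⟩ := exists_lift (x 0) (S (x 0, x 1)) t
    rw [← h0] at hq hg
    have : S (y 0, y 1) = s' := by
      refine huniq _ _ ?_
      change yf (y 0) s' = y 1
      rw [yf, hq, hg, h1]
    simp only [this]
    exact ⟨hq, hg⟩
  · intro x
    have hrad : rad 0 = 1 := by simp [rad]
    have y1 : yf 0 1 = 2 := by
      rw [yf, gf_of_gt (by norm_num)]; simp [qf]
    constructor
    · rintro ⟨h0, hq⟩
      simp only [h0] at hq
      have hyx := hy (0, x 1)
      have h1 : S (0, x 1) ^ 2 = 1 := by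
        rw [qf, hrad] at hq
        linarith
      rcases (by simpa using h1 : S (0, x 1) = 1 ∨ S (0, x 1) = -1) with h | h
      · left
        rw [h, y1] at hyx
        ext i
        fin_cases i
        · exact h0
        · exact hyx.symm
      · right
        rw [h, yf_neg, y1] at hyx
        ext i
        fin_cases i
        · exact h0
        · exact hyx.symm
    · rintro (rfl | rfl)
      · have : S (0, 2) = 1 := huniq _ _ y1
        simp [this, qf]
      · have : S (0, -2) = -1 := huniq _ _ (by rw [yf_neg]; simp [y1])
        simp [this, qf]

/-! ### The flow and the invariant space -/

/-- There is a smooth planar flow with exactly two (isolated) equilibria together with a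
finite-dimensional subspace of smooth functions which contains the two coordinate
functions ("contains the state") and is invariant under the Koopman operators. -/
theorem statement13 :
    ∃ (Φ : ℝ → (Fin 2 → ℝ) → (Fin 2 → ℝ)) (W : Submodule ℝ ((Fin 2 → ℝ) → ℝ)),
      IsSmoothFlow Φ ∧
      (∃ a b : Fin 2 → ℝ, a ≠ b ∧ {x | ∀ t, Φ t x = x} = {a, b}) ∧
      (∀ x ∈ {x | ∀ t, Φ t x = x}, ∃ U ∈ 𝓝 x, ∀ y ∈ U, (∀ t, Φ t y = y) → y = x) ∧
      (∀ ψ ∈ W, ContDiff ℝ (⊤ : ℕ∞) ψ) ∧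
      FiniteDimensional ℝ W ∧
      (fun x : Fin 2 → ℝ => x 0) ∈ W ∧ (fun x : Fin 2 → ℝ => x 1) ∈ W ∧
      ∀ ψ ∈ W, ∀ t : ℝ, (fun x => ψ (Φ t x)) ∈ W := by
  obtain ⟨q, g, hq, hg, hstate, hflow, heq⟩ := exists_observables
  let X : ℝ → (Fin 2 → ℝ) → ℝ := fun t x => x 0 * Real.cosh t + q x * Real.sinh t
  let Q : ℝ → (Fin 2 → ℝ) → ℝ := fun t x => x 0 * Real.sinh t + q x * Real.cosh t
  let Φ : ℝ → (Fin 2 → ℝ) → (Fin 2 → ℝ) := fun t x =>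
    ![X t x, g x * (Q t x + 2 * (1 + X t x ^ 2))]
  have hΦ0 : ∀ t x, Φ t x 0 = X t x := fun _ _ => rfl
  have hΦq : ∀ t x, q (Φ t x) = Q t x := fun t x => (hflow x t (Φ t x) rfl rfl).1
  have hΦg : ∀ t x, g (Φ t x) = g x := fun t x => (hflow x t (Φ t x) rfl rfl).2
  let ψ : Fin 8 → (Fin 2 → ℝ) → ℝ := ![fun x => x 0, q, g, fun x => g x * x 0, fun x => g x * q x,
    fun x => g x * x 0 ^ 2, fun x => g x * (x 0 * q x), fun x => g x * q x ^ 2]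
  have hmem : ∀ (φ : (Fin 2 → ℝ) → ℝ) (c : Fin 8 → ℝ), (∀ x, φ x =
      c 0 * x 0 + c 1 * q x + g x * (c 2 + c 3 * x 0 + c 4 * q x + c 5 * x 0 ^ 2 +
        c 6 * (x 0 * q x) + c 7 * q x ^ 2)) → φ ∈ Submodule.span ℝ (Set.range ψ) := by
    intro φ c h
    refine (Submodule.mem_span_range_iff_exists_fun ℝ).2 ⟨c, funext fun x => ?_⟩
    simp only [Fin.sum_univ_eight, Pi.add_apply, Pi.smul_apply, smul_eq_mul, h]
    simp [ψ]
    ring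
  have hfix : ∀ x, (∀ t, Φ t x = x) ↔ x = ![0, 2] ∨ x = ![0, -2] := by
    intro x
    rw [← heq]
    constructor
    · intro h
      have hX : ∀ t, X t x = x 0 := fun t => congrFun (h t) 0
      -- Times `1` and `-1` already force `p = q = 0`.
      have hX1 := hX 1
      have hX2 := hX (-1)
      simp only [X, Real.cosh_neg, Real.sinh_neg] at hX1 hX2
      have hc : 1 < Real.cosh 1 := Real.one_lt_cosh.2 one_ne_zero
      have hs : 0 < Real.sinh 1 := Real.sinh_pos_iff.2 one_pos
      constructor
      · have : x 0 * (Real.cosh 1 - 1) = 0 := by linarith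
        exact (mul_eq_zero.1 this).resolve_right (by linarith)
      · have : q x * Real.sinh 1 = 0 := by linarith
        exact (mul_eq_zero.1 this).resolve_right hs.ne'
    · rintro ⟨h0, h1⟩ t
      have hs := hstate x
      ext i
      fin_cases i
      · simp [Φ, X, h0, h1]
      · simp [Φ, X, Q, h0, h1, hs]
  have hne : (![0, 2] : Fin 2 → ℝ) ≠ ![0, -2] := fun h => by
    have := congrFun h 1
    norm_num at this
  refine ⟨Φ, Submodule.span ℝ (Set.range ψ), ⟨?_, ?_, ?_⟩, ⟨_, _, hne, ?_⟩, ?_, ?_, ?_, ?_, ?_, ?_⟩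
  · have hq' : ContDiff ℝ (⊤ : ℕ∞) fun z : ℝ × (Fin 2 → ℝ) => q z.2 := hq.comp contDiff_snd
    have hg' : ContDiff ℝ (⊤ : ℕ∞) fun z : ℝ × (Fin 2 → ℝ) => g z.2 := hg.comp contDiff_snd
    have hch : ContDiff ℝ (⊤ : ℕ∞) fun z : ℝ × (Fin 2 → ℝ) => Real.cosh z.1 :=
      Real.contDiff_cosh.comp contDiff_fst
    have hsh : ContDiff ℝ (⊤ : ℕ∞) fun z : ℝ × (Fin 2 → ℝ) => Real.sinh z.1 :=
      Real.contDiff_sinh.comp contDiff_fst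
    have hx : ContDiff ℝ (⊤ : ℕ∞) fun z : ℝ × (Fin 2 → ℝ) => z.2 0 := by fun_prop
    have hX := (hx.mul hch).add (hq'.mul hsh)
    have hQ := (hx.mul hsh).add (hq'.mul hch)
    rw [contDiff_pi]
    intro i
    fin_cases i
    · exact hX
    · exact hg'.mul (hQ.add (contDiff_const.mul (contDiff_const.add (hX.pow 2))))
  · intro x
    ext i
    fin_cases i
    · simp [Φ, X]
    · simp [Φ, X, Q, hstate x]
  · intro t s x
    have hX : X (t + s) x = X t (Φ s x) := by
      simp only [X, hΦ0, hΦq, Q, Real.cosh_add, Real.sinh_add]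
      ring
    have hQ : Q (t + s) x = Q t (Φ s x) := by
      simp only [Q, hΦ0, hΦq, X, Real.cosh_add, Real.sinh_add]
      ring
    ext i
    fin_cases i
    · exact hX
    · change g x * (Q (t + s) x + 2 * (1 + X (t + s) x ^ 2)) =
        g (Φ s x) * (Q t (Φ s x) + 2 * (1 + X t (Φ s x) ^ 2))
      rw [hX, hQ, hΦg]
  · ext x
    exact hfix x
  · intro x hx
    -- The complement of the other equilibrium is a suitable neighbourhood.
    rcases (hfix x).1 hx with rfl | rfl
    · refine ⟨_, isOpen_compl_singleton.mem_nhds (Set.mem_compl_singleton_iff.2 hne), ?_⟩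
      intro y hy hfy
      exact ((hfix y).1 hfy).resolve_right hy
    · refine ⟨_, isOpen_compl_singleton.mem_nhds (Set.mem_compl_singleton_iff.2 hne.symm), ?_⟩
      intro y hy hfy
      exact ((hfix y).1 hfy).resolve_left hy
  · intro φ hφ
    have h0 : ContDiff ℝ (⊤ : ℕ∞) fun x : Fin 2 → ℝ => x 0 := by fun_prop
    obtain ⟨c, rfl⟩ := (Submodule.mem_span_range_iff_exists_fun ℝ).1 hφ
    have : ∀ i, ContDiff ℝ (⊤ : ℕ∞) (ψ i) := by
      intro i
      fin_cases i
      exacts [h0, hq, hg, hg.mul h0, hg.mul hq, hg.mul (h0.pow 2), hg.mul (h0.mul hq),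
        hg.mul (hq.pow 2)]
    have := ContDiff.sum (s := Finset.univ) fun i _ => (this i).const_smul (c i)
    convert this using 1
    ext x
    simp
  · exact FiniteDimensional.span_of_finite ℝ (Set.finite_range ψ)
  · exact hmem _ ![1, 0, 0, 0, 0, 0, 0, 0] fun x => by simp
  · exact hmem _ ![0, 0, 2, 0, 1, 2, 0, 0] fun x => by
      rw [hstate x]
      simp only [Matrix.cons_val]
      ring
  · intro φ hφ t
    obtain ⟨c, rfl⟩ := (Submodule.mem_span_range_iff_exists_fun ℝ).1 hφ
    refine hmem _ ![c 0 * Real.cosh t + c 1 * Real.sinh t, c 0 * Real.sinh t + c 1 * Real.cosh t,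
      c 2, c 3 * Real.cosh t + c 4 * Real.sinh t, c 3 * Real.sinh t + c 4 * Real.cosh t,
      c 5 * Real.cosh t ^ 2 + c 6 * (Real.cosh t * Real.sinh t) + c 7 * Real.sinh t ^ 2,
      2 * c 5 * (Real.cosh t * Real.sinh t) + c 6 * (Real.cosh t ^ 2 + Real.sinh t ^ 2) +
        2 * c 7 * (Real.cosh t * Real.sinh t),
      c 5 * Real.sinh t ^ 2 + c 6 * (Real.cosh t * Real.sinh t) + c 7 * Real.cosh t ^ 2]
      fun x => ?_
    simp only [Fin.sum_univ_eight, Pi.add_apply, Pi.smul_apply, smul_eq_mul]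
    simp [ψ, hΦ0, hΦq, hΦg, X, Q]
    ring
end
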